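/- arXiv:1107.2729 — 2 statements merged into one kernel-verified Lean document; each statement's English description precedes it below -/
import Mathlib

section
/- Let S be a string over an alphabet Σ whose RL factorization has n factors, and let w be a string containing at least two distinct characters. Then the number of occurrences of w in S satisfies |Occ(S, w)| ≤ n − 1. (Each occurrence of w must span a boundary between two consecutive RL factors, and the position of the first character change inside w maps distinct occurrences to distinct factor boundaries.) -/
/-- Expand a run-length encoding (a list of pairs `(aᵢ, pᵢ)`) into the string
`a₁^{p₁} ⋯ a_n^{p_n}` it represents. -/
def rlExpand {α : Type*} (l : List (α × ℕ)) : List α :=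
  (l.map (fun f => List.replicate f.2 f.1)).flatten

/-- `l` is an RL factorization of `S`: every exponent is at least 1, the characters of
consecutive factors differ, and the expansion of `l` is `S`. -/
def IsRLFact {α : Type*} (S : List α) (l : List (α × ℕ)) : Prop :=
  rlExpand l = S ∧ (∀ f ∈ l, 1 ≤ f.2) ∧ l.Chain' (fun f g => f.1 ≠ g.1)

theorem rl_boundaries {α : Type*} (l : List (α × ℕ)) :
    ∃ F : Finset ℕ, F.card ≤ l.length - 1 ∧ ∀ j a b, (rlExpand l)[j]? = some a →
      (rlExpand l)[j+1]? = some b → a ≠ b → j ∈ F := by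
  induction l with
  | nil => exact ⟨∅, by simp, by simp [rlExpand]⟩
  | cons f t ih =>
    obtain ⟨F, hF, hm⟩ := ih
    have he : rlExpand (f :: t) = List.replicate f.2 f.1 ++ rlExpand t := by simp [rlExpand]
    cases t with
    | nil =>
      refine ⟨∅, by simp, ?_⟩
      intro j a b h1 h2 hab
      simp only [rlExpand, List.map_cons, List.map_nil, List.flatten_cons, List.flatten_nil,
        List.append_nil, List.getElem?_replicate] at h1 h2
      grind
    | cons g t =>
      refine ⟨insert (f.2 - 1) (F.image (· + f.2)), ?_, ?_⟩
      · have h1 := Finset.card_insert_le (f.2 - 1) (F.image (· + f.2))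
        have h2 := Finset.card_image_le (s := F) (f := (· + f.2))
        simp only [List.length_cons] at *
        omega
      · intro j a b h1 h2 hab
        rw [he, List.getElem?_append] at h1 h2
        simp only [List.length_replicate, List.getElem?_replicate] at h1 h2
        rw [Finset.mem_insert, Finset.mem_image]
        by_cases hj : j < f.2
        · left
          by_cases hj2 : j + 1 < f.2
          · simp_all
          · omega
        · right
          rw [if_neg hj] at h1
          rw [if_neg (by omega), show j + 1 - f.2 = j - f.2 + 1 by omega] at h2
          exact ⟨j - f.2, hm _ a b h1 h2 hab, by omega⟩

theorem exists_change {α : Type*} (w : List α) (hw : ∃ x ∈ w, ∃ y ∈ w, x ≠ y) :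
    ∃ i a b, w[i]? = some a ∧ w[i+1]? = some b ∧ a ≠ b := by
  by_contra hc
  push Not at hc
  have key : ∀ i (h : i < w.length), w[i] = w[0]'(by omega) := by
    intro i
    induction i with
    | zero => intro h; rfl
    | succ i ih =>
      intro h
      rw [← ih (by omega)]
      exact (hc i _ _ (List.getElem?_eq_getElem (by omega)) (List.getElem?_eq_getElem h)).symm
  obtain ⟨x, hx, y, hy, hxy⟩ := hw
  obtain ⟨i, hi, rfl⟩ := List.getElem_of_mem hx
  obtain ⟨j, hj, rfl⟩ := List.getElem_of_mem hy
  exact hxy ((key i hi).trans (key j hj).symm)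

/-- If the RL factorization of `S` has `n` factors and `w` contains at least two distinct
characters, then `w` occurs at most `n - 1` times in `S` (occurrences are indexed from 0:
`w` occurs at position `k` iff it is a prefix of `S.drop k`). -/
theorem occurrences_of_nonconstant_le {α : Type*} (S : List α) (l : List (α × ℕ))
    (h : IsRLFact S l) (w : List α) (hw : ∃ x ∈ w, ∃ y ∈ w, x ≠ y) :
    {k : ℕ | w <+: S.drop k}.ncard ≤ l.length - 1 := by
  obtain ⟨F, hF, hm⟩ := rl_boundaries l
  obtain ⟨i, a, b, ha, hb, hab⟩ := exists_change w hw
  rw [h.1] at hm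
  refine le_trans ?_ hF
  rw [← Set.ncard_coe_finset]
  refine Set.ncard_le_ncard_of_injOn (· + i) ?_ (fun x _ y _ hxy => by simpa using hxy)
    (Finset.finite_toSet F)
  rintro k ⟨r, hr⟩
  have get : ∀ m c, w[m]? = some c → S[k + m]? = some c := by
    intro m c hc
    rw [← List.getElem?_drop, ← hr]
    have hl : m < w.length := by
      by_contra hlt
      rw [List.getElem?_eq_none (by omega)] at hc
      cases hc
    rw [List.getElem?_append_left hl, hc]
  exact hm (k + i) a b (get i a ha) (get (i + 1) b hb) hab
end

section
/- Let X and Y be nonempty strings with RL factorizations X = a_1^{p_1} ⋯ a_n^{p_n} and Y = b_1^{q_1} ⋯ b_m^{q_m}, and let l ≥ 0 be the largest integer with l ≤ min(n, m) such that a_i = b_i and p_i = q_i for all 1 ≤ i ≤ l. Then lcp(X, Y) = p_1 + ⋯ + p_l + c, where c = min(p_{l+1}, q_{l+1}) if l < min(n, m) and a_{l+1} = b_{l+1}, and c = 0 otherwise. -/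
/-- `lcpLen X Y` is the length of the longest common prefix of `X` and `Y`. -/
def lcpLen {α : Type*} [DecidableEq α] (X Y : List α) : ℕ :=
  ((X.zip Y).takeWhile (fun p => p.1 = p.2)).length

theorem lcpLen_replicate_append {α : Type*} [DecidableEq α] (p : ℕ) (a : α) (X Y : List α) :
    lcpLen (List.replicate p a ++ X) (List.replicate p a ++ Y) = p + lcpLen X Y := by
  induction p with
  | zero => simp
  | succ k ih =>
    simp only [lcpLen] at ih
    simp [lcpLen, List.replicate_succ, ih]
    omega

theorem lcpLen_cons_ne {α : Type*} [DecidableEq α] (a b : α) (h : a ≠ b) (X Y : List α) :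
    lcpLen (a :: X) (b :: Y) = 0 := by
  simp [lcpLen, h]

theorem rlExpand_cons {α : Type*} (x : α) (p : ℕ) (t : List (α × ℕ)) :
    rlExpand ((x, p) :: t) = List.replicate p x ++ rlExpand t := by
  simp [rlExpand]

theorem lcpLen_comm' {α : Type*} [DecidableEq α] (X Y : List α) :
    lcpLen X Y = lcpLen Y X := by
  induction X generalizing Y with
  | nil => simp [lcpLen]
  | cons a X ih =>
    cases Y with
    | nil => simp [lcpLen]
    | cons b Y =>
      by_cases h : a = b
      · subst h
        have := ih Y
        simp only [lcpLen] at this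
        simp [lcpLen, this]
      · rw [lcpLen_cons_ne _ _ h, lcpLen_cons_ne _ _ (Ne.symm h)]

theorem lcpLen_run_lt {α : Type*} [DecidableEq α] (x : α) (p q : ℕ) (hpq : p < q)
    (t : List (α × ℕ)) (Z : List α) (h1 : ∀ f ∈ t, 1 ≤ f.2)
    (hc : List.IsChain (fun f g : α × ℕ => f.1 ≠ g.1) ((x, p) :: t)) :
    lcpLen (List.replicate p x ++ rlExpand t) (List.replicate q x ++ Z) = p := by
  obtain ⟨d, rfl⟩ : ∃ d, q = p + (d + 1) := ⟨q - p - 1, by omega⟩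
  rw [List.replicate_add, List.append_assoc, lcpLen_replicate_append, List.replicate_succ]
  cases t with
  | nil => simp [rlExpand, lcpLen]
  | cons f t =>
    obtain ⟨y, r⟩ := f
    have hr : 1 ≤ r := h1 (y, r) (by simp)
    obtain ⟨r, rfl⟩ : ∃ e, r = e + 1 := ⟨r - 1, by omega⟩
    have hne : x ≠ y := by
      rw [List.isChain_cons_cons] at hc
      exact hc.1
    rw [rlExpand_cons, List.replicate_succ, List.cons_append, List.cons_append,
      lcpLen_cons_ne _ _ (Ne.symm hne)]
    rfl

theorem lcp_of_rl_aux {α : Type*} [DecidableEq α] (L : ℕ) (fx fy : List (α × ℕ))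
    (hx1 : ∀ f ∈ fx, 1 ≤ f.2) (hxc : List.IsChain (fun f g : α × ℕ => f.1 ≠ g.1) fx)
    (hy1 : ∀ f ∈ fy, 1 ≤ f.2) (hyc : List.IsChain (fun f g : α × ℕ => f.1 ≠ g.1) fy)
    (hL : L ≤ min fx.length fy.length)
    (hagree : ∀ i < L, fx[i]? = fy[i]?)
    (hmax : L = min fx.length fy.length ∨ fx[L]? ≠ fy[L]?) :
    lcpLen (rlExpand fx) (rlExpand fy) = ((fx.take L).map Prod.snd).sum +
      (fx[L]?.elim 0 fun f => fy[L]?.elim 0 fun g =>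
        if f.1 = g.1 then min f.2 g.2 else 0) := by
  induction L generalizing fx fy with
  | zero =>
    rcases fx with _ | ⟨⟨x, p⟩, fx⟩
    · simp [rlExpand, lcpLen]
    rcases fy with _ | ⟨⟨y, q⟩, fy⟩
    · simp [rlExpand, lcpLen]
    have hp : 1 ≤ p := hx1 (x, p) (by simp)
    have hq : 1 ≤ q := hy1 (y, q) (by simp)
    simp only [List.take_zero, List.map_nil, List.sum_nil, zero_add, List.getElem?_cons_zero,
      Option.elim_some]
    rw [rlExpand_cons, rlExpand_cons]
    by_cases h : x = y
    · subst h
      rw [if_pos rfl]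
      rcases lt_trichotomy p q with h | h | h
      · rw [lcpLen_run_lt x p q h fx _ (fun f hf => hx1 f (by simp [hf])) hxc]
        omega
      · subst h
        rcases hmax with h | h
        · simp at h
        · simp at h
      · rw [lcpLen_comm', lcpLen_run_lt x q p h fy _ (fun f hf => hy1 f (by simp [hf])) hyc]
        omega
    · rw [if_neg h]
      obtain ⟨p, rfl⟩ : ∃ e, p = e + 1 := ⟨p - 1, by omega⟩
      obtain ⟨q, rfl⟩ : ∃ e, q = e + 1 := ⟨q - 1, by omega⟩
      exact lcpLen_cons_ne _ _ h _ _
  | succ L ih =>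
    rcases fx with _ | ⟨⟨x, p⟩, fx⟩
    · simp at hL
    rcases fy with _ | ⟨⟨y, q⟩, fy⟩
    · simp at hL
    have h0 := hagree 0 (by omega)
    simp only [List.getElem?_cons_zero, Option.some.injEq, Prod.mk.injEq] at h0
    obtain ⟨rfl, rfl⟩ := h0
    have key := ih fx fy (fun f hf => hx1 f (by simp [hf])) hxc.tail
      (fun f hf => hy1 f (by simp [hf])) hyc.tail
      (by simp only [List.length_cons] at hL; omega)
      (fun i hi => by simpa using hagree (i + 1) (by omega))
      (by
        rcases hmax with h | h
        · left
          simp only [List.length_cons] at h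
          omega
        · right
          simpa using h)
    rw [rlExpand_cons, rlExpand_cons, lcpLen_replicate_append, key]
    simp only [List.take_succ_cons, List.map_cons, List.sum_cons, List.getElem?_cons_succ]
    rw [add_assoc]

/-- Longest common prefix via RL factorizations: if `L` is the largest integer
`≤ min n m` such that the first `L` RL factors of `X` and `Y` agree, then
`lcp(X,Y) = p₁ + ⋯ + p_L + c`, where `c = min (p_{L+1}, q_{L+1})` when `L < min n m` and
`a_{L+1} = b_{L+1}`, and `c = 0` otherwise. -/
theorem lcp_of_rl_facts {α : Type*} [DecidableEq α] (X Y : List α) (hX : X ≠ []) (hY : Y ≠ [])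
    (fx fy : List (α × ℕ)) (hfx : IsRLFact X fx) (hfy : IsRLFact Y fy)
    (L : ℕ) (hL : L ≤ min fx.length fy.length)
    (hagree : ∀ i < L, fx[i]? = fy[i]?)
    (hmax : L = min fx.length fy.length ∨ fx[L]? ≠ fy[L]?) :
    lcpLen X Y = ((fx.take L).map Prod.snd).sum +
      (match fx[L]?, fy[L]? with
       | some (x, p), some (y, q) => if x = y then min p q else 0
       | _, _ => 0) := by
  obtain ⟨rfl, hx1, hxc⟩ := hfx
  obtain ⟨rfl, hy1, hyc⟩ := hfy
  rw [lcp_of_rl_aux L fx fy hx1 hxc hy1 hyc hL hagree hmax]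
  congr 1
  rcases fx[L]? with _ | ⟨x, p⟩
  · rfl
  · rcases fy[L]? with _ | ⟨y, q⟩ <;> rfl
end
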